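/- Let X be a separable metric space and X* its completion. Then X is strictly ℕ^ℕ-dominated if and only if X is a Borel subset of X*. -/

import Mathlib

/-!
Let `A` be a strict domination of `X`. For `α : ℕ → ℕ` let `C n α` (`core A n α`) be the union of
the `A K` over compact `K` whose elements are bounded by `α` in the first `n` coordinates. The rule
`A (K ∩ L) = A K ∩ A L` makes `{α | x ∈ C n α}` closed under meets, hence the set of `α` with
`x ∈ ⋂ n, C n α` has a least element `α(x)` (`exists_least`). Compactness of the `A K` shows that
`⋂ n, closure (C n α)`, computed in the completion, equals `⋂ n, C n α`
(`mem_of_mem_closure_core`). Therefore the graph of `x ↦ α(x)` is a Borel subset of `X* × ℕ^ℕ`: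
it is cut out of a closed set by the condition that no coordinate of `α` can be lowered by one. Its
projection to `X*` is injective with image `X`, so `X` is Borel by the Lusin–Souslin theorem.

Conversely, a Borel subset of a Polish space is the image of a closed set `F ⊆ ℕ^ℕ` under a map `φ`
which is continuous and injective on `F` (`IsInjClosedImage.of_measurableSet_polish`), and
`A K = φ (F ∩ K)` is a strict domination.
-/

open Set Filter Topology

namespace StrictDomination

/-! ### Strict domination implies Borel -/

/-- The sequences bounded by `α` in their first `n` coordinates. -/
def boxLT (n : ℕ) (α : ℕ → ℕ) : Set (ℕ → ℕ) := {β | ∀ i < n, β i ≤ α i}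

/-- The points of `X` lying in some `A K` with `K` a compact subset of `boxLT n α`. It depends only
on the first `n` values of `α`. -/
def core {X : Type*} (A : Set (ℕ → ℕ) → Set X) (n : ℕ) (α : ℕ → ℕ) : Set X :=
  {x | ∃ K, IsCompact K ∧ K ⊆ boxLT n α ∧ x ∈ A K}

section
variable {X : Type*} {A : Set (ℕ → ℕ) → Set X}

theorem core_mono {n : ℕ} {α β : ℕ → ℕ} (h : ∀ i < n, α i ≤ β i) : core A n α ⊆ core A n β := by
  rintro x ⟨K, hK, hKα, hx⟩
  exact ⟨K, hK, fun z hz i hi => (hKα hz i hi).trans (h i hi), hx⟩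

theorem core_inter (hA : ∀ K L : Set (ℕ → ℕ), IsCompact K → IsCompact L → A (K ∩ L) = A K ∩ A L)
    {n : ℕ} {α β : ℕ → ℕ} {x : X} (h₁ : x ∈ core A n α) (h₂ : x ∈ core A n β) :
    x ∈ core A n (α ⊓ β) := by
  obtain ⟨K, hK, hKα, hx⟩ := h₁
  obtain ⟨L, hL, hLβ, hx'⟩ := h₂
  refine ⟨K ∩ L, hK.inter hL, fun z hz i hi => le_min (hKα hz.1 i hi) (hLβ hz.2 i hi), ?_⟩
  rw [hA K L hK hL]
  exact ⟨hx, hx'⟩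

theorem exists_bound_of_isCompact {K : Set (ℕ → ℕ)} (hK : IsCompact K) :
    ∃ b : ℕ → ℕ, ∀ β ∈ K, ∀ i, β i ≤ b i := by
  have h : ∀ i, ∃ b, ∀ β ∈ K, β i ≤ b := by
    intro i
    obtain ⟨b, hb⟩ := (hK.image (continuous_apply i)).bddAbove
    exact ⟨b, fun β hβ => hb ⟨β, hβ, rfl⟩⟩
  choose b hb using h
  exact ⟨b, fun β hβ i => hb i β hβ⟩

theorem exists_mem_core (hcov : (⋃ K ∈ {K : Set (ℕ → ℕ) | IsCompact K}, A K) = univ) (x : X) :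
    ∃ α, ∀ n, x ∈ core A n α := by
  have hx : x ∈ ⋃ K ∈ {K : Set (ℕ → ℕ) | IsCompact K}, A K := hcov ▸ mem_univ x
  simp only [mem_ofPred_eq, mem_iUnion, exists_prop] at hx
  obtain ⟨K, hK, hx⟩ := hx
  obtain ⟨b, hb⟩ := exists_bound_of_isCompact hK
  exact ⟨b, fun n => ⟨K, hK, fun β hβ i _ => hb β hβ i, hx⟩⟩

/-- For each point `x`, the set of those `α` with `x ∈ core A n α` for all `n` has a least element,
namely its pointwise infimum: on the first `n` coordinates this infimum is already attained by a
finite meet. -/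
theorem exists_least (hA : ∀ K L : Set (ℕ → ℕ), IsCompact K → IsCompact L → A (K ∩ L) = A K ∩ A L)
    (hcov : (⋃ K ∈ {K : Set (ℕ → ℕ) | IsCompact K}, A K) = univ) (x : X) :
    ∃ α, (∀ n, x ∈ core A n α) ∧ ∀ β, (∀ n, x ∈ core A n β) → α ≤ β := by
  classical
  have hne : ∀ i, ∃ k, ∃ α : ℕ → ℕ, (∀ n, x ∈ core A n α) ∧ α i = k := fun i =>
    let ⟨α, hα⟩ := exists_mem_core hcov x
    ⟨α i, α, hα, rfl⟩
  choose γ hγ hγi using fun i => Nat.find_spec (hne i)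
  refine ⟨fun i => Nat.find (hne i), fun n => ?_, fun β hβ i => Nat.find_min' (hne i) ⟨β, hβ, rfl⟩⟩
  -- the meet of the first `k` witnesses still works, and agrees with the infimum below `k`
  have key : ∀ k, ∃ δ : ℕ → ℕ, x ∈ core A n δ ∧ ∀ i < k, δ i ≤ Nat.find (hne i) := by
    intro k
    induction k with
    | zero => exact ⟨γ 0, hγ 0 n, by simp⟩
    | succ k ih =>
      obtain ⟨δ, hδ, hle⟩ := ih
      refine ⟨δ ⊓ γ k, core_inter hA hδ (hγ k n), fun i hi => ?_⟩
      rcases Nat.lt_succ_iff_lt_or_eq.1 hi with h | rfl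
      · exact (min_le_left _ _).trans (hle i h)
      · exact (min_le_right _ _).trans (hγi i).le
  obtain ⟨δ, hδ, hle⟩ := key n
  exact core_mono hle hδ

/-- Taking closures in a larger space adds nothing to `⋂ n, core A n α`. If `u n ∈ A (K n)` with
`K n ⊆ boxLT n α` and `u n → y`, then for every `m` the sets `K n`, `n ≥ m`, all lie in one compact
box contained in `boxLT m α`, so `y` lies in the image of a compact set indexed by that box. -/
theorem mem_of_mem_closure_core {Y : Type*} [TopologicalSpace X] [MetricSpace Y] {j : X → Y}
    (hj : Continuous j) (hinj : Function.Injective j)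
    (hc : ∀ K : Set (ℕ → ℕ), IsCompact K → IsCompact (A K))
    (hA : ∀ K L : Set (ℕ → ℕ), IsCompact K → IsCompact L → A (K ∩ L) = A K ∩ A L)
    {α : ℕ → ℕ} {y : Y} (hy : ∀ n, y ∈ closure (j '' core A n α)) :
    ∃ x, j x = y ∧ ∀ n, x ∈ core A n α := by
  have h : ∀ n : ℕ, ∃ x ∈ core A n α, dist y (j x) < 1 / ((n : ℝ) + 1) := by
    intro n
    obtain ⟨_, ⟨x, hx, rfl⟩, hd⟩ := Metric.mem_closure_iff.1 (hy n) _ Nat.one_div_pos_of_nat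
    exact ⟨x, hx, hd⟩
  choose u hu hd using h
  choose K hK hKα huK using hu
  choose b hb using fun n => exists_bound_of_isCompact (hK n)
  have hlim : Tendsto (fun n => j (u n)) atTop (𝓝 y) := by
    rw [tendsto_iff_dist_tendsto_zero]
    refine squeeze_zero (fun _ => dist_nonneg) (fun n => ?_)
      (tendsto_one_div_add_atTop_nhds_zero_nat (𝕜 := ℝ))
    rw [dist_comm]
    exact (hd n).le
  have main : ∀ m, ∃ x ∈ core A m α, j x = y := by
    intro m
    -- this box agrees with `α` below `m` and contains `K n` for all `n ≥ m`
    let γ : ℕ → ℕ := fun i =>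
      if i < m then α i else max (α i) ((Finset.range (i + 1)).sup fun n => b n i)
    have hL : IsCompact (univ.pi fun i => Iic (γ i)) :=
      isCompact_univ_pi fun i => (finite_Iic _).isCompact
    have hKL : ∀ n ≥ m, K n ⊆ univ.pi fun i => Iic (γ i) := by
      intro n hn β hβ i _
      simp only [mem_Iic, γ]
      split_ifs with hi
      · exact hKα n hβ i (hi.trans_le hn)
      · rcases lt_or_ge i n with hin | hin
        · exact (hKα n hβ i hin).trans (le_max_left _ _)
        · exact ((hb n β hβ i).trans (Finset.le_sup (f := fun n => b n i)
            (Finset.mem_range.2 (Nat.lt_succ_of_le hin)))).trans (le_max_right _ _)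
    have hmem : y ∈ j '' A (univ.pi fun i => Iic (γ i)) := by
      refine ((hc _ hL).image hj).isClosed.mem_of_tendsto hlim ?_
      filter_upwards [eventually_ge_atTop m] with n hn
      refine mem_image_of_mem j ?_
      have := hA _ _ (hK n) hL
      rw [inter_eq_left.2 (hKL n hn)] at this
      exact (this ▸ huK n : _ ∈ A (K n) ∩ _).2
    obtain ⟨x, hx, rfl⟩ := hmem
    refine ⟨x, ⟨_, hL, fun β hβ i hi => ?_, hx⟩, rfl⟩
    simpa [γ, hi] using hβ i (mem_univ i)
  obtain ⟨x, -, hx⟩ := main 0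
  refine ⟨x, hx, fun n => ?_⟩
  obtain ⟨x', hx', h'⟩ := main n
  rwa [hinj (hx.trans h'.symm)]

/-- The condition `y ∈ closure (j '' core A n α)` is closed in `y` and locally constant in `α`. -/
theorem isClosed_graph {Y : Type*} [TopologicalSpace Y] (j : X → Y) :
    IsClosed {p : Y × (ℕ → ℕ) | ∀ n, p.1 ∈ closure (j '' core A n p.2)} := by
  rw [ofPred_forall]
  refine isClosed_iInter fun n => ?_
  rw [← isOpen_compl_iff, isOpen_iff_mem_nhds]
  rintro ⟨y, α⟩ hy
  have h₁ : ∀ᶠ p : Y × (ℕ → ℕ) in 𝓝 (y, α), p.1 ∈ (closure (j '' core A n α))ᶜ :=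
    continuous_fst.continuousAt.eventually (isClosed_closure.isOpen_compl.mem_nhds hy)
  have h₂ : ∀ᶠ p : Y × (ℕ → ℕ) in 𝓝 (y, α), ∀ i ∈ Finset.range n, p.2 i = α i := by
    rw [Filter.eventually_all_finset]
    intro i _
    have : Continuous fun p : Y × (ℕ → ℕ) => p.2 i := by fun_prop
    exact this.continuousAt.eventually ((isOpen_discrete {α i}).mem_nhds (mem_singleton (α i)))
  filter_upwards [h₁, h₂] with p hp hpα hp'
  refine hp (closure_mono (image_mono (core_mono fun i hi => ?_)) hp')
  exact (hpα i (Finset.mem_range.2 hi)).le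

/-- The image of a strictly `ℕ^ℕ`-dominated space under a continuous injection `j` into a Polish
space is Borel: the pairs `(j x, α)` with `α` the least sequence attached to `x` form a Borel set,
on which the first projection is injective. -/
theorem borel_of_strictly_dominated {Y : Type*} [TopologicalSpace X] [MetricSpace Y] [PolishSpace Y]
    [MeasurableSpace Y] [BorelSpace Y] {j : X → Y}
    (hj : Continuous j) (hinj : Function.Injective j)
    (hc : ∀ K : Set (ℕ → ℕ), IsCompact K → IsCompact (A K))
    (hcov : (⋃ K ∈ {K : Set (ℕ → ℕ) | IsCompact K}, A K) = univ)
    (hA : ∀ K L : Set (ℕ → ℕ), IsCompact K → IsCompact L → A (K ∩ L) = A K ∩ A L) :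
    MeasurableSet (range j) := by
  set G : Set (Y × (ℕ → ℕ)) := {p | ∀ n, p.1 ∈ closure (j '' core A n p.2)} with hG
  have hGc : IsClosed G := isClosed_graph j
  let dec : ℕ → Y × (ℕ → ℕ) → Y × (ℕ → ℕ) := fun i p => (p.1, Function.update p.2 i (p.2 i - 1))
  have hdec : ∀ i, Continuous (dec i) := fun i => by
    have : Continuous fun p : Y × (ℕ → ℕ) => p.2 i - 1 :=
      continuous_of_discreteTopology.comp (g := fun k : ℕ => k - 1)
        ((continuous_apply i).comp continuous_snd)
    exact continuous_fst.prodMk (continuous_snd.update i this)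
  -- it is enough to test minimality of `α` against lowering a single coordinate by one;
  -- the truncated subtraction in `dec` does not matter, as the case `p.2 i = 0` is set apart
  let E : Set (Y × (ℕ → ℕ)) := G ∩ ⋂ i, ({p | p.2 i = 0} ∪ (dec i ⁻¹' G)ᶜ)
  have hE : MeasurableSet E := by
    refine hGc.measurableSet.inter (MeasurableSet.iInter fun i => .union ?_ ?_)
    · have : Continuous fun p : Y × (ℕ → ℕ) => p.2 i := by fun_prop
      exact ((isClosed_discrete {0}).preimage this).measurableSet
    · exact (hGc.preimage (hdec i)).measurableSet.compl
  have hGmem : ∀ x α, (j x, α) ∈ G ↔ ∀ n, x ∈ core A n α := by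
    refine fun x α => ⟨fun h => ?_, fun h n => subset_closure (mem_image_of_mem j (h n))⟩
    obtain ⟨x', hx', h'⟩ := mem_of_mem_closure_core hj hinj hc hA h
    rwa [← hinj hx']
  have hGrange : ∀ p ∈ G, ∃ x, j x = p.1 := fun p hp =>
    let ⟨x, hx, _⟩ := mem_of_mem_closure_core hj hinj hc hA hp
    ⟨x, hx⟩
  have hmin : ∀ x α β, (j x, α) ∈ E → (j x, β) ∈ G → α ≤ β := by
    intro x α β hα hβ i
    by_contra! hlt
    have hi := mem_iInter.1 hα.2 i
    rcases hi with h0 | hi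
    · exact (Nat.ne_of_gt ((Nat.zero_le _).trans_lt hlt)) h0
    · refine hi ((hGmem _ _).2 fun n => core_mono (fun k _ => ?_)
        (core_inter hA ((hGmem _ _).1 hα.1 n) ((hGmem _ _).1 hβ n)))
      by_cases hk : k = i
      · subst hk
        simp only [Pi.inf_apply, Function.update_self]
        exact (min_le_right _ _).trans (Nat.le_sub_one_of_lt hlt)
      · simp [hk]
  have hrange : range j = Prod.fst '' E := by
    ext y
    constructor
    · rintro ⟨x, rfl⟩
      obtain ⟨α, hα, hle⟩ := exists_least hA hcov x
      refine ⟨(j x, α), ⟨(hGmem _ _).2 hα, mem_iInter.2 fun i => ?_⟩, rfl⟩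
      by_contra hcon
      simp only [mem_union, mem_ofPred_eq, mem_compl_iff, mem_preimage, not_or, not_not] at hcon
      have := hle _ ((hGmem _ _).1 hcon.2) i
      simp only [Function.update_self] at this
      omega
    · rintro ⟨p, hp, rfl⟩
      exact hGrange p hp.1
  rw [hrange]
  refine hE.image_of_continuousOn_injOn continuous_fst.continuousOn ?_
  rintro ⟨y, α⟩ hα ⟨z, β⟩ hβ (rfl : y = z)
  obtain ⟨x, rfl⟩ := hGrange _ hα.1
  exact Prod.ext rfl (le_antisymm (hmin x α β hα hβ.1) (hmin x β α hβ hα.1))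

end

/-! ### Borel implies strict domination -/

/-- `s` is the image of a closed subset of the Baire space under a map which is continuous and
injective on that closed set. The map is total, so this fails when `Y` is empty. -/
def IsInjClosedImage {Y : Type*} [TopologicalSpace Y] (s : Set Y) : Prop :=
  ∃ (F : Set (ℕ → ℕ)) (φ : (ℕ → ℕ) → Y), IsClosed F ∧ ContinuousOn φ F ∧ InjOn φ F ∧ φ '' F = s

namespace IsInjClosedImage
variable {Y : Type*} [TopologicalSpace Y]

theorem of_isClosed {s : Set (ℕ → ℕ)} (hs : IsClosed s) : IsInjClosedImage s :=
  ⟨s, id, hs, continuousOn_id, injOn_id s, image_id s⟩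

theorem image {Z : Type*} [TopologicalSpace Z] {s : Set Y} (hs : IsInjClosedImage s) {h : Y → Z}
    (hc : ContinuousOn h s) (hi : InjOn h s) : IsInjClosedImage (h '' s) := by
  obtain ⟨F, φ, hF, hφ, hinj, rfl⟩ := hs
  exact ⟨F, h ∘ φ, hF, hc.comp hφ (mapsTo_image φ F), hi.comp hinj (mapsTo_image φ F),
    image_comp h φ F⟩

/-- The countable intersection is parametrized by the sequences of parameters of one common point,
after coding `ℕ → ℕ → ℕ` as `ℕ → ℕ`. -/
theorem iInter [T2Space Y] {s : ℕ → Set Y} (hs : ∀ n, IsInjClosedImage (s n)) :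
    IsInjClosedImage (⋂ n, s n) := by
  choose F φ hF hφ hinj hs using hs
  let p : ℕ → (ℕ → ℕ) → (ℕ → ℕ) := fun n z i => z (Nat.pair n i)
  have hp : ∀ n, Continuous (p n) := fun n => by fun_prop
  have hpinj : ∀ z w, (∀ n, p n z = p n w) → z = w := by
    intro z w h
    funext k
    simpa [p] using congrFun (h k.unpair.1) k.unpair.2
  let G : Set (ℕ → ℕ) := ⋂ n, p n ⁻¹' F n
  have hG : IsClosed G := isClosed_iInter fun n => (hF n).preimage (hp n)
  have hcont : ∀ n, ContinuousOn (fun z => φ n (p n z)) G := fun n =>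
    (hφ n).comp (hp n).continuousOn fun z hz => mem_iInter.1 hz n
  let H : Set (ℕ → ℕ) := ⋂ n, (G ∩ (fun z => (φ n (p n z), φ 0 (p 0 z))) ⁻¹' diagonal Y)
  have hH : ∀ z, z ∈ H ↔ (∀ n, p n z ∈ F n) ∧ ∀ n, φ n (p n z) = φ 0 (p 0 z) := by
    intro z
    simp only [H, G, mem_iInter, mem_inter_iff, mem_preimage, mem_diagonal_iff]
    exact ⟨fun h => ⟨(h 0).1, fun n => (h n).2⟩, fun h n => ⟨h.1, h.2 n⟩⟩
  refine ⟨H, fun z => φ 0 (p 0 z), ?_, ?_, ?_, ?_⟩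
  · exact isClosed_iInter fun n =>
      ((hcont n).prodMk (hcont 0)).preimage_isClosed_of_isClosed hG isClosed_diagonal
  · exact (hcont 0).mono fun z hz => (mem_iInter.1 hz 0).1
  · intro z hz w hw h
    rw [hH] at hz hw
    exact hpinj z w fun n => hinj n (hz.1 n) (hw.1 n) ((hz.2 n).trans (h.trans (hw.2 n).symm))
  · ext y
    constructor
    · rintro ⟨z, hz, rfl⟩
      rw [hH] at hz
      refine mem_iInter.2 fun n => ?_
      change φ 0 (p 0 z) ∈ s n
      rw [← hs n, ← hz.2 n]
      exact mem_image_of_mem _ (hz.1 n)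
    · intro hy
      have : ∀ n, ∃ x ∈ F n, φ n x = y := fun n => by
        have := mem_iInter.1 hy n
        rwa [← hs n] at this
      choose x hx hxy using this
      have hpx : ∀ n, p n (fun k => x k.unpair.1 k.unpair.2) = x n := by
        intro n
        funext i
        simp [p]
      refine ⟨fun k => x k.unpair.1 k.unpair.2, (hH _).2 ⟨fun n => ?_, fun n => ?_⟩, ?_⟩
      · rw [hpx]; exact hx n
      · rw [hpx, hpx, hxy, hxy]
      · simp only [hpx, hxy]

/-- The first coordinate of the parameter selects the piece, the remaining ones parametrize it. -/
theorem iUnion_of_disjoint {s : ℕ → Set Y} (hs : ∀ n, IsInjClosedImage (s n))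
    (hd : Pairwise (Function.onFun Disjoint s)) : IsInjClosedImage (⋃ n, s n) := by
  choose F φ hF hφ hinj hs using hs
  let t : (ℕ → ℕ) → (ℕ → ℕ) := fun z i => z (i + 1)
  have ht : Continuous t := by fun_prop
  have h0 : ∀ n : ℕ, IsClopen {z : ℕ → ℕ | z 0 = n} := fun n =>
    (isClopen_discrete {n}).preimage (continuous_apply 0)
  have hmem : ∀ z : ℕ → ℕ, t z ∈ F (z 0) → φ (z 0) (t z) ∈ s (z 0) := fun z hz => by
    rw [← hs]; exact mem_image_of_mem _ hz
  refine ⟨{z | t z ∈ F (z 0)}, fun z => φ (z 0) (t z), ?_, ?_, ?_, ?_⟩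
  · have : {z : ℕ → ℕ | t z ∈ F (z 0)} = ⋂ n, ({z : ℕ → ℕ | z 0 = n}ᶜ ∪ t ⁻¹' F n) := by
      ext z
      simp only [mem_ofPred_eq, mem_iInter, mem_union, mem_compl_iff, mem_preimage]
      refine ⟨fun h n => ?_, fun h => (h (z 0)).resolve_left (by simp)⟩
      by_cases hn : z 0 = n
      · exact .inr (hn ▸ h)
      · exact .inl hn
    rw [this]
    exact isClosed_iInter fun n => (h0 n).compl.1.union ((hF n).preimage ht)
  · intro z hz
    have hev : ∀ᶠ w : ℕ → ℕ in 𝓝 z, w 0 = z 0 := (h0 (z 0)).2.mem_nhds rfl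
    have hc : ContinuousOn (fun w => φ (z 0) (t w)) (t ⁻¹' F (z 0)) :=
      (hφ (z 0)).comp ht.continuousOn fun _ h => h
    have hnhds : t ⁻¹' F (z 0) ∈ 𝓝[{w : ℕ → ℕ | t w ∈ F (w 0)}] z := by
      filter_upwards [self_mem_nhdsWithin, hev.filter_mono nhdsWithin_le_nhds] with w hw hw0
      have : t w ∈ F (w 0) := hw
      rwa [hw0] at this
    have hc' := (hc z hz).mono_of_mem_nhdsWithin hnhds
    refine hc'.congr_of_eventuallyEq ?_ rfl
    filter_upwards [hev.filter_mono nhdsWithin_le_nhds] with w hw0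
    rw [hw0]
  · intro z hz w hw h
    have hzw : z 0 = w 0 := by
      by_contra hne
      refine disjoint_left.1 (hd hne) (hmem z hz) ?_
      have := hmem w hw
      simp only at h
      rwa [← h] at this
    have htail : t z = t w := by
      have hz' : t z ∈ F (z 0) := hz
      have hw' : t w ∈ F (w 0) := hw
      simp only at h
      rw [← hzw] at hw' h
      exact hinj _ hz' hw' h
    funext i
    cases i with
    | zero => exact hzw
    | succ i => exact congrFun htail i
  · ext y
    simp only [mem_iUnion]
    constructor
    · rintro ⟨z, hz, rfl⟩
      exact ⟨_, hmem z hz⟩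
    · rintro ⟨n, hy⟩
      rw [← hs n] at hy
      obtain ⟨x, hx, rfl⟩ := hy
      let w : ℕ → ℕ := fun i => Nat.casesOn i n x
      exact ⟨w, show x ∈ F n from hx, rfl⟩

/-- Borel subsets of the Baire space are injective continuous images of closed sets: the sets which,
together with their complement, have this property form a σ-algebra containing the cylinders. -/
theorem of_measurableSet {s : Set (ℕ → ℕ)} (hs : @MeasurableSet _ (borel (ℕ → ℕ)) s) :
    IsInjClosedImage s := by
  suffices h : IsInjClosedImage s ∧ IsInjClosedImage sᶜ from h.1
  rw [(PiNat.isTopologicalBasis_cylinders (E := fun _ => ℕ)).borel_eq_generateFrom] at hs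
  induction s, hs using MeasurableSpace.generateFrom_induction with
  | hC u hu _ =>
    obtain ⟨x, n, rfl⟩ := hu
    refine ⟨of_isClosed ?_, of_isClosed (PiNat.isOpen_cylinder _ x n).isClosed_compl⟩
    rw [PiNat.cylinder_eq_pi]
    exact isClosed_set_pi fun _ _ => isClosed_discrete _
  | empty => exact ⟨of_isClosed isClosed_empty, of_isClosed (by simp)⟩
  | compl u _ h => exact ⟨h.2, by rw [compl_compl]; exact h.1⟩
  | iUnion u _ h =>
    refine ⟨?_, by rw [compl_iUnion]; exact iInter fun n => (h n).2⟩
    rw [← iUnion_disjointed]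
    refine iUnion_of_disjoint (fun n => ?_) (disjoint_disjointed u)
    -- the difference `u n \ ⋃ m < n, u m` as one countable intersection, to which `iInter` applies
    have : disjointed u n = ⋂ m, if m < n then (u m)ᶜ else u n := by
      rw [disjointed_eq_inter_compl]
      ext y
      simp only [mem_inter_iff, mem_iInter]
      refine ⟨fun hy m => ?_, fun hy => ⟨by simpa using hy n, fun m hm => by simpa [hm] using hy m⟩⟩
      split_ifs with hm
      · exact hy.2 m hm
      · exact hy.1
    rw [this]
    refine iInter fun m => ?_
    split_ifs
    · exact (h m).2
    · exact (h n).1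

/-- Borel subsets of a Polish space are injective continuous images of closed sets. The indicators
of a countable basis embed `Y` in the Baire space by a Borel map whose inverse is continuous on the
image, which reduces the claim to the Baire space itself. -/
theorem of_measurableSet_polish [PolishSpace Y] [Nonempty Y] {s : Set Y} (hs : @MeasurableSet _ (borel Y) s) :
    IsInjClosedImage s := by
  classical
  borelize Y
  obtain ⟨b, hb⟩ := TopologicalSpace.exists_seq_basis Y
  let g : Y → ℕ → ℕ := fun y n => if y ∈ b n then 1 else 0
  have hg1 : ∀ y n, g y n = 1 ↔ y ∈ b n := fun y n => by simp [g]
  have hginj : Function.Injective g := by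
    intro y z h
    by_contra hne
    obtain ⟨_, ⟨n, rfl⟩, hy, hsub⟩ :=
      hb.exists_subset_of_mem_open (show y ∈ ({z}ᶜ : Set Y) from hne) isOpen_compl_singleton
    exact hsub ((hg1 z n).1 (congrFun h n ▸ (hg1 y n).2 hy)) rfl
  have hgm : Measurable g := measurable_pi_lambda _ fun n =>
    Measurable.ite (hb.isOpen (mem_range_self n)).measurableSet measurable_const measurable_const
  have himg : MeasurableSet (g '' s) := hs.image_of_measurable_injOn hgm hginj.injOn
  rw [BorelSpace.measurable_eq (α := ℕ → ℕ)] at himg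
  have hinv : Function.LeftInverse (Function.invFun g) g := Function.leftInverse_invFun hginj
  have hcont : ContinuousOn (Function.invFun g) (g '' s) := by
    rintro _ ⟨y, hy, rfl⟩
    rw [ContinuousWithinAt, hinv y, hb.nhds_hasBasis.tendsto_right_iff]
    rintro _ ⟨⟨n, rfl⟩, hyn⟩
    have hev : ∀ᶠ z : ℕ → ℕ in 𝓝 (g y), z n = 1 :=
      (continuous_apply n).continuousAt.eventually
        ((isOpen_discrete {1}).mem_nhds (mem_singleton_iff.2 ((hg1 y n).2 hyn)))
    filter_upwards [self_mem_nhdsWithin, hev.filter_mono nhdsWithin_le_nhds] with z hz hz1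
    obtain ⟨x, -, rfl⟩ := hz
    rw [hinv x]
    exact (hg1 x n).1 hz1
  have := (of_measurableSet himg).image hcont (by
    rintro _ ⟨x, -, rfl⟩ _ ⟨y, -, rfl⟩ h
    rw [hinv, hinv] at h
    rw [h])
  rwa [← image_comp, hinv.comp_eq_id, image_id] at this

end IsInjClosedImage

theorem strictly_dominated_of_isInjClosedImage {X Y : Type*} [TopologicalSpace X]
    [TopologicalSpace Y] {j : X → Y} (hj : IsEmbedding j) (h : IsInjClosedImage (range j)) :
    ∃ A : Set (ℕ → ℕ) → Set X,
      (∀ K : Set (ℕ → ℕ), IsCompact K → IsCompact (A K)) ∧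
      (⋃ K ∈ {K : Set (ℕ → ℕ) | IsCompact K}, A K) = univ ∧
      (∀ K L : Set (ℕ → ℕ), IsCompact K → IsCompact L → A (K ∩ L) = A K ∩ A L) := by
  obtain ⟨F, φ, hF, hφ, hinj, himg⟩ := h
  refine ⟨fun K => j ⁻¹' (φ '' (F ∩ K)), fun K hK => ?_, ?_, fun K L _ _ => ?_⟩
  · rw [hj.isInducing.isCompact_iff, image_preimage_eq_of_subset]
    · exact (hK.inter_left hF).image_of_continuousOn (hφ.mono inter_subset_left)
    · exact himg ▸ image_mono inter_subset_left
  · refine eq_univ_of_forall fun x => ?_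
    obtain ⟨z, hz, hzx⟩ := himg.symm ▸ mem_range_self (f := j) x
    simp only [mem_iUnion]
    exact ⟨{z}, isCompact_singleton, z, ⟨hz, rfl⟩, hzx⟩
  · beta_reduce
    rw [inter_inter_distrib_left, (hinj.image_inter inter_subset_left inter_subset_left),
      preimage_inter]

end StrictDomination

/-- A separable metric space is strictly `ℕ^ℕ`-dominated iff it is a Borel subset of its
completion. -/
theorem strictly_dominated_iff_borel (X : Type*) [MetricSpace X]
    [TopologicalSpace.SeparableSpace X] :
    (∃ A : Set (ℕ → ℕ) → Set X,
      (∀ K : Set (ℕ → ℕ), IsCompact K → IsCompact (A K)) ∧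
      (⋃ K ∈ {K : Set (ℕ → ℕ) | IsCompact K}, A K) = Set.univ ∧
      (∀ K L : Set (ℕ → ℕ), IsCompact K → IsCompact L → A (K ∩ L) = A K ∩ A L)) ↔
    @MeasurableSet (UniformSpace.Completion X) (borel (UniformSpace.Completion X))
      (Set.range ((↑) : X → UniformSpace.Completion X)) := by
  borelize (UniformSpace.Completion X)
  have hemb : IsEmbedding ((↑) : X → UniformSpace.Completion X) :=
    UniformSpace.Completion.isDenseEmbedding_coe.isEmbedding
  have : PolishSpace (UniformSpace.Completion X) := by
    have := UniformSpace.secondCountable_of_separable (UniformSpace.Completion X)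
    infer_instance
  constructor
  · rintro ⟨A, hc, hcov, hA⟩
    exact StrictDomination.borel_of_strictly_dominated hemb.continuous hemb.injective hc hcov hA
  · intro h
    rcases isEmpty_or_nonempty X with hX | ⟨⟨x⟩⟩
    · exact ⟨fun _ => ∅, fun _ _ => isCompact_empty, Subsingleton.elim _ _, by simp⟩
    · have : Nonempty (UniformSpace.Completion X) := ⟨(x : UniformSpace.Completion X)⟩
      exact StrictDomination.strictly_dominated_of_isInjClosedImage hemb
        (StrictDomination.IsInjClosedImage.of_measurableSet_polish h)
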